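/- Suppose the sequences γ = (r_k)_{k≥0}, σ = (s_k)_{k≥0}, τ = (t_k)_{k≥1} of q-nonnegative polynomials satisfy at least one of the following five conditions: (1) s_0 ≥_q r_0 and s_k ≥_q r_k + t_k for all k ≥ 1; (2) s_0 ≥_q t_1 and s_k ≥_q r_{k−1} + t_{k+1} for all k ≥ 1; (3) s_0 ≥_q 1 and s_k ≥_q r_{k−1}·t_k + 1 for all k ≥ 1; (4) s_0 ≥_q r_0·t_1 and s_k ≥_q r_k·t_{k+1} + 1 for all k ≥ 1; (5) there exist q-nonnegative polynomials b_k, c_k with r_k = 1, s_k = b_k + c_k, t_{k+1} = b_{k+1}·c_k for all k ≥ 0. Let a_k := c_{k,0}. Then for all integers 0 ≤ i < j < k, the polynomial a_{2i}·a_{j+k}² + a_{2j}·a_{i+k}² + a_{2k}·a_{i+j}² − 3·a_{i+j}·a_{j+k}·a_{k+i} is q-nonnegative. -/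

import Mathlib

/-!
The array `c` is `(Jⁿ)₀ₖ` for the tridiagonal matrix `J` with superdiagonal `r`, diagonal `s` and
subdiagonal `t`, so with `d n k = (Jⁿ)ₖ₀` the Hankel matrix factors as
`a (p + q) = ∑ l, c p l * d q l`. Each of the five conditions makes `s k * s (k + 1) - r k * t (k + 1)`
`q`-nonnegative, hence all `2 × 2` minors of `J` are.

For a `3 × 3` matrix `m` consider, besides entries and `2 × 2` minors, the two Temperley–Lieb immanants
* `m₁₂m₂₁m₃₃ - m₁₂m₂₃m₃₁ - m₁₃m₂₁m₃₂ + m₁₃m₂₂m₃₁ = m₁₁ Δ(23; 23) - det m`,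
* `m₁₁m₂₃m₃₂ - m₁₂m₂₃m₃₁ - m₁₃m₂₁m₃₂ + m₁₃m₂₂m₃₁ = m₃₃ Δ(12; 12) - det m`.

Nonnegativity of the entries, the `2 × 2` minors and these immanants (on all `3 × 3` submatrices) is
preserved by matrix products, by a Cauchy–Binet expansion (`Good.imm1_mul`, `Good.imm2_mul`). Being
multiplicative, it passes from `J` to `c` and `d` (`array_good`), and then to the Hankel matrix. On the
submatrix with rows and columns `i, j, k`, with `A = a₂ᵢ, B = a₂ⱼ, C = a₂ₖ`, `x = aᵢ₊ⱼ, y = aᵢ₊ₖ,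
z = aⱼ₊ₖ`, the claim is the identity
`Az² + By² + Cx² - 3xyz = (Cx² + By² - 2xyz) + (Az² + By² - 2xyz) + y (xz - By)`,
whose summands are the two immanants and `y` times a `2 × 2` minor.
-/

open Polynomial

/-- A polynomial is `q`-nonnegative if all of its coefficients are nonnegative. -/
def QNonneg (f : Polynomial ℝ) : Prop := ∀ i, 0 ≤ f.coeff i

/-! ### Coefficientwise nonnegativity -/

namespace QNonneg

lemma zero : QNonneg 0 := fun i => by simp

lemma one : QNonneg 1 := fun i => by
  rw [Polynomial.coeff_one]; split_ifs <;> norm_num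

lemma add {f g : ℝ[X]} (hf : QNonneg f) (hg : QNonneg g) : QNonneg (f + g) := fun i => by
  rw [Polynomial.coeff_add]; exact add_nonneg (hf i) (hg i)

lemma mul {f g : ℝ[X]} (hf : QNonneg f) (hg : QNonneg g) : QNonneg (f * g) := fun i => by
  rw [Polynomial.coeff_mul]
  exact Finset.sum_nonneg fun p _ => mul_nonneg (hf p.1) (hg p.2)

lemma sum {ι : Type*} (S : Finset ι) (f : ι → ℝ[X]) (h : ∀ i ∈ S, QNonneg (f i)) :
    QNonneg (∑ i ∈ S, f i) := fun n => by
  rw [Polynomial.finsetSum_coeff]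
  exact Finset.sum_nonneg fun i hi => h i hi n

lemma of_nsmul {f : ℝ[X]} (n : ℕ) (hn : 0 < n) (h : QNonneg (n • f)) : QNonneg f := fun i => by
  have := h i
  rw [Polynomial.coeff_smul, nsmul_eq_mul] at this
  exact nonneg_of_mul_nonneg_right this (by exact_mod_cast hn)

end QNonneg

/-- A double sum is `q`-nonnegative as soon as its symmetrization is termwise so. -/
lemma qnonneg_sum_two (N : ℕ) (F : ℕ → ℕ → ℝ[X])
    (h : ∀ k p, k ≤ p → QNonneg (F k p + F p k)) :
    QNonneg (∑ k ∈ Finset.range N, ∑ p ∈ Finset.range N, F k p) := by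
  apply QNonneg.of_nsmul 2 (by norm_num)
  have e : 2 • (∑ k ∈ Finset.range N, ∑ p ∈ Finset.range N, F k p) =
      ∑ k ∈ Finset.range N, ∑ p ∈ Finset.range N, (F k p + F p k) := by
    simp only [Finset.sum_add_distrib]
    rw [Finset.sum_comm (f := fun k p => F p k), two_nsmul]
  rw [e]
  refine QNonneg.sum _ _ fun k _ => QNonneg.sum _ _ fun p _ => ?_
  rcases le_total k p with hkp | hkp
  · exact h k p hkp
  · rw [add_comm]; exact h p k hkp

/-- A triple sum is `q`-nonnegative as soon as its symmetrization is termwise so; by symmetry it is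
enough to look at sorted triples of indices. -/
lemma qnonneg_sum_three (N : ℕ) (F : ℕ → ℕ → ℕ → ℝ[X])
    (h : ∀ k p q, k ≤ p → p ≤ q →
      QNonneg (F k p q + F k q p + F p k q + F p q k + F q k p + F q p k)) :
    QNonneg (∑ k ∈ Finset.range N, ∑ p ∈ Finset.range N, ∑ q ∈ Finset.range N, F k p q) := by
  apply QNonneg.of_nsmul 6 (by norm_num)
  have swap12 : ∀ G : ℕ → ℕ → ℕ → ℝ[X],
      (∑ k ∈ Finset.range N, ∑ p ∈ Finset.range N, ∑ q ∈ Finset.range N, G p k q) =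
      ∑ k ∈ Finset.range N, ∑ p ∈ Finset.range N, ∑ q ∈ Finset.range N, G k p q :=
    fun G => Finset.sum_comm
  have swap23 : ∀ G : ℕ → ℕ → ℕ → ℝ[X],
      (∑ k ∈ Finset.range N, ∑ p ∈ Finset.range N, ∑ q ∈ Finset.range N, G k q p) =
      ∑ k ∈ Finset.range N, ∑ p ∈ Finset.range N, ∑ q ∈ Finset.range N, G k p q :=
    fun G => Finset.sum_congr rfl fun k _ => Finset.sum_comm
  have e : 6 • (∑ k ∈ Finset.range N, ∑ p ∈ Finset.range N, ∑ q ∈ Finset.range N, F k p q) =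
      ∑ k ∈ Finset.range N, ∑ p ∈ Finset.range N, ∑ q ∈ Finset.range N,
        (F k p q + F k q p + F p k q + F p q k + F q k p + F q p k) := by
    simp only [Finset.sum_add_distrib]
    rw [swap23 F, swap12 F, swap12 (fun p k q => F p q k), swap23 F,
      swap23 (fun k q p => F q k p), swap12 F, swap23 (fun k q p => F q p k),
      swap12 (fun q k p => F q p k), swap23 F]
    simp only [nsmul_eq_mul]; push_cast; ring
  rw [e]
  refine QNonneg.sum _ _ fun k _ => QNonneg.sum _ _ fun p _ => QNonneg.sum _ _ fun q _ => ?_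
  rcases le_total k p with h1 | h1 <;> rcases le_total p q with h2 | h2 <;>
    rcases le_total k q with h3 | h3
  · exact h k p q h1 h2
  · exact h k p q h1 h2
  · convert h k q p h3 h2 using 1; ring
  · convert h q k p h3 h1 using 1; ring
  · convert h p k q h1 h3 using 1; ring
  · convert h p q k h2 h3 using 1; ring
  · convert h q p k h2 h1 using 1; ring
  · convert h q p k h2 h1 using 1; ring

/-! ### Immanants of products of matrices -/

/-- The first Temperley–Lieb immanant of the submatrix of the rows `x, y, z` on columns `a, b, c`. -/
noncomputable def imm1 (x y z : ℕ → ℝ[X]) (a b c : ℕ) : ℝ[X] :=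
  x b * y a * z c - x b * y c * z a - x c * y a * z b + x c * y b * z a

/-- The second Temperley–Lieb immanant of the submatrix of the rows `x, y, z` on columns `a, b, c`. -/
noncomputable def imm2 (x y z : ℕ → ℝ[X]) (a b c : ℕ) : ℝ[X] :=
  x a * y c * z b - x b * y c * z a - x c * y a * z b + x c * y b * z a

/-- The `2 × N` matrix with rows `x, y` has `q`-nonnegative `2 × 2` minors. -/
def Good2 (x y : ℕ → ℝ[X]) : Prop := ∀ a b, a < b → QNonneg (x a * y b - x b * y a)

/-- The `3 × N` matrix with rows `x, y, z` has `q`-nonnegative entries, `2 × 2` minors in consecutive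
rows, and Temperley–Lieb immanants `imm1`, `imm2`. -/
structure Good (x y z : ℕ → ℝ[X]) : Prop where
  nx : ∀ a, QNonneg (x a)
  ny : ∀ a, QNonneg (y a)
  nz : ∀ a, QNonneg (z a)
  xy : Good2 x y
  yz : Good2 y z
  i1 : ∀ a b c, a < b → b < c → QNonneg (imm1 x y z a b c)
  i2 : ∀ a b c, a < b → b < c → QNonneg (imm2 x y z a b c)

/-- The truncated inner product, an entry of a matrix product. -/
noncomputable def dot (N : ℕ) (x y : ℕ → ℝ[X]) : ℝ[X] := ∑ k ∈ Finset.range N, x k * y k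

lemma dot_mul (N : ℕ) (x y x' y' : ℕ → ℝ[X]) :
    dot N x x' * dot N y y' = ∑ k ∈ Finset.range N, ∑ p ∈ Finset.range N,
      x k * x' k * (y p * y' p) := by
  simp only [dot, Finset.sum_mul_sum]

lemma dot_mul_mul (N : ℕ) (x y z x' y' z' : ℕ → ℝ[X]) :
    dot N x x' * dot N y y' * dot N z z' = ∑ k ∈ Finset.range N, ∑ p ∈ Finset.range N,
      ∑ q ∈ Finset.range N, x k * x' k * (y p * y' p) * (z q * z' q) := by
  rw [dot_mul, dot]
  simp only [Finset.sum_mul, Finset.mul_sum]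
  rw [Finset.sum_comm]
  refine Finset.sum_congr rfl fun k _ => ?_
  rw [Finset.sum_comm]

/-- Cauchy–Binet for `2 × 2` minors. -/
lemma Good2.mul {x y x' y' : ℕ → ℝ[X]} (h : Good2 x y) (h' : Good2 x' y') (N : ℕ) :
    QNonneg (dot N x x' * dot N y y' - dot N x y' * dot N y x') := by
  rw [dot_mul, dot_mul]
  simp only [← Finset.sum_sub_distrib]
  apply qnonneg_sum_two
  intro k p hkp
  rcases hkp.eq_or_lt with rfl | hlt
  · convert QNonneg.zero using 1; ring
  · convert (h k p hlt).mul (h' k p hlt) using 1; ring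

/-- Cauchy–Binet for the first immanant `m₁₁ Δ(23; 23) - det m`. With `α, β, γ` the terms of the
expansion of `det` along the first row, a triple of distinct intermediate indices contributes
`αα' + ββ' + γγ' - (α - β + γ)(α' - β' + γ') = α(β' - γ') + (β - γ)α' + βγ' + γβ'`,
where `β - γ` is again the first immanant. -/
lemma Good.imm1_mul {x y z x' y' z' : ℕ → ℝ[X]} (h : Good x y z) (h' : Good x' y' z') (N : ℕ) :
    QNonneg (dot N x y' * dot N y x' * dot N z z' - dot N x y' * dot N y z' * dot N z x'
      - dot N x z' * dot N y x' * dot N z y' + dot N x z' * dot N y y' * dot N z x') := by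
  simp only [dot_mul_mul]
  simp only [← Finset.sum_sub_distrib, ← Finset.sum_add_distrib]
  apply qnonneg_sum_three
  intro u v w huv hvw
  rcases huv.eq_or_lt with rfl | huv
  · rcases hvw.eq_or_lt with rfl | hvw
    · convert QNonneg.zero using 1; ring
    · have := ((h.nx u).mul (h.yz u w hvw)).mul ((h'.nx u).mul (h'.yz u w hvw))
      convert this.add this using 1; ring
  · rcases hvw.eq_or_lt with rfl | hvw
    · have := ((h.nx v).mul (h.yz u v huv)).mul ((h'.nx v).mul (h'.yz u v huv))
      convert this.add this using 1; ring
    · have huw := huv.trans hvw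
      have hα := (h.nx u).mul (h.yz v w hvw)
      have hβ := (h.nx v).mul (h.yz u w huw)
      have hγ := (h.nx w).mul (h.yz u v huv)
      have hα' := (h'.nx u).mul (h'.yz v w hvw)
      have hβ' := (h'.nx v).mul (h'.yz u w huw)
      have hγ' := (h'.nx w).mul (h'.yz u v huv)
      convert (((hα.mul (h'.i1 u v w huv hvw)).add ((h.i1 u v w huv hvw).mul hα')).add
        (hβ.mul hγ')).add (hγ.mul hβ') using 1
      simp only [imm1]; ring

/-- Cauchy–Binet for the second immanant; the mirror image of `Good.imm1_mul`, expanding along the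
last row. -/
lemma Good.imm2_mul {x y z x' y' z' : ℕ → ℝ[X]} (h : Good x y z) (h' : Good x' y' z') (N : ℕ) :
    QNonneg (dot N x x' * dot N y z' * dot N z y' - dot N x y' * dot N y z' * dot N z x'
      - dot N x z' * dot N y x' * dot N z y' + dot N x z' * dot N y y' * dot N z x') := by
  simp only [dot_mul_mul]
  simp only [← Finset.sum_sub_distrib, ← Finset.sum_add_distrib]
  apply qnonneg_sum_three
  intro u v w huv hvw
  rcases huv.eq_or_lt with rfl | huv
  · rcases hvw.eq_or_lt with rfl | hvw
    · convert QNonneg.zero using 1; ring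
    · have := ((h.nz u).mul (h.xy u w hvw)).mul ((h'.nz u).mul (h'.xy u w hvw))
      convert this.add this using 1; ring
  · rcases hvw.eq_or_lt with rfl | hvw
    · have := ((h.nz v).mul (h.xy u v huv)).mul ((h'.nz v).mul (h'.xy u v huv))
      convert this.add this using 1; ring
    · have huw := huv.trans hvw
      have hα := (h.nz w).mul (h.xy u v huv)
      have hβ := (h.nz v).mul (h.xy u w huw)
      have hγ := (h.nz u).mul (h.xy v w hvw)
      have hα' := (h'.nz w).mul (h'.xy u v huv)
      have hβ' := (h'.nz v).mul (h'.xy u w huw)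
      have hγ' := (h'.nz u).mul (h'.xy v w hvw)
      convert (((hα.mul (h'.i2 u v w huv hvw)).add ((h.i2 u v w huv hvw).mul hα')).add
        (hβ.mul hγ')).add (hγ.mul hβ') using 1
      simp only [imm2]; ring

/-! ### Tridiagonal matrices -/

/-- Column `k` of the tridiagonal matrix `J` with superdiagonal `r`, diagonal `s` and subdiagonal
`t 1, t 2, …`, as a function of the row index `l`. -/
noncomputable def jac (r s t : ℕ → ℝ[X]) (k l : ℕ) : ℝ[X] :=
  if k = l + 1 then r l else if k = l then s l else if l = k + 1 then t l else 0

/-- Transposing `J` exchanges the two off-diagonals. -/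
lemma jac_swap (r s t : ℕ → ℝ[X]) (k l : ℕ) :
    jac (fun n => t (n + 1)) s (fun n => r (n - 1)) k l = jac r s t l k := by
  unfold jac
  rcases lt_trichotomy k l with h | rfl | h
  · by_cases h1 : l = k + 1
    · subst h1; simp
      omega
    · rw [if_neg (by omega), if_neg (by omega), if_neg (by omega), if_neg (by omega),
        if_neg (by omega), if_neg (by omega)]
  · simp
  · by_cases h1 : k = l + 1
    · subst h1; simp
      omega
    · rw [if_neg (by omega), if_neg (by omega), if_neg (by omega), if_neg (by omega),
        if_neg (by omega), if_neg (by omega)]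

lemma jac_eq_zero (r s t : ℕ → ℝ[X]) {k l : ℕ} (h : l + 1 < k ∨ k + 1 < l) :
    jac r s t k l = 0 := by
  unfold jac
  rw [if_neg (by omega), if_neg (by omega), if_neg (by omega)]

section jac

variable {r s t : ℕ → ℝ[X]} (hr : ∀ k, QNonneg (r k)) (hs : ∀ k, QNonneg (s k))
  (ht : ∀ k, QNonneg (t (k + 1))) (hst : ∀ k, QNonneg (s k * s (k + 1) - r k * t (k + 1)))

include hr hs ht in
lemma jac_nonneg (k l : ℕ) : QNonneg (jac r s t k l) := by
  unfold jac
  split_ifs with h1 h2 h3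
  · exact hr l
  · exact hs l
  · subst h3; exact ht k
  · exact QNonneg.zero

include hr hs ht hst in
lemma jac_good2 {a b : ℕ} (hab : a < b) : Good2 (jac r s t a) (jac r s t b) := by
  intro u v huv
  have hn := jac_nonneg hr hs ht
  by_cases h : v ≤ a + 1 ∧ b ≤ u + 1
  · obtain rfl : u = a := by omega
    obtain rfl : v = u + 1 := by omega
    obtain rfl : b = u + 1 := by omega
    convert hst u using 1
    simp only [jac, if_neg (show ¬ u = u + 1 + 1 by omega), if_neg (show ¬ u = u + 1 by omega),
      if_neg (show ¬ u + 1 = u + 1 + 1 by omega),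
      if_true]
    ring
  · have : jac r s t a v * jac r s t b u = 0 := by
      rcases not_and_or.mp h with h | h
      · rw [jac_eq_zero r s t (Or.inr (by omega)), zero_mul]
      · rw [jac_eq_zero r s t (k := b) (Or.inl (by omega)), mul_zero]
    rw [this, sub_zero]
    exact (hn _ _).mul (hn _ _)

include hr hs ht hst in
/-- The negative terms of both immanants vanish for a tridiagonal matrix: they would need two entries
whose distances from the diagonal add up to at least three. -/
lemma jac_good {a b c : ℕ} (hab : a < b) (hbc : b < c) :
    Good (jac r s t a) (jac r s t b) (jac r s t c) := by
  have hn := jac_nonneg hr hs ht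
  have z1 : ∀ u v w, u < v → v < w → jac r s t a v * jac r s t c u = 0 := by
    intro u v w huv hvw
    by_cases h : v ≤ a + 1
    · rw [jac_eq_zero r s t (k := c) (Or.inl (by omega)), mul_zero]
    · rw [jac_eq_zero r s t (k := a) (Or.inr (by omega)), zero_mul]
  have z2 : ∀ u v w, u < v → v < w → jac r s t a w * jac r s t b u = 0 := by
    intro u v w huv hvw
    by_cases h : w ≤ a + 1
    · rw [jac_eq_zero r s t (k := b) (Or.inl (by omega)), mul_zero]
    · rw [jac_eq_zero r s t (k := a) (Or.inr (by omega)), zero_mul]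
  have z3 : ∀ u v w, u < v → v < w → jac r s t a v * jac r s t b w * jac r s t c u = 0 := by
    intro u v w huv hvw
    linear_combination jac r s t b w * z1 u v w huv hvw
  have z4 : ∀ u v w, u < v → v < w → jac r s t a w * jac r s t b u * jac r s t c v = 0 := by
    intro u v w huv hvw
    linear_combination jac r s t c v * z2 u v w huv hvw
  refine ⟨hn a, hn b, hn c, jac_good2 hr hs ht hst hab, jac_good2 hr hs ht hst hbc, ?_, ?_⟩
  · intro u v w huv hvw
    rw [imm1, z3 u v w huv hvw, z4 u v w huv hvw, sub_zero, sub_zero]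
    exact (((hn _ _).mul (hn _ _)).mul (hn _ _)).add (((hn _ _).mul (hn _ _)).mul (hn _ _))
  · intro u v w huv hvw
    rw [imm2, z3 u v w huv hvw, z4 u v w huv hvw, sub_zero, sub_zero]
    exact (((hn _ _).mul (hn _ _)).mul (hn _ _)).add (((hn _ _).mul (hn _ _)).mul (hn _ _))

end jac

/-! ### Catalan–Stieltjes matrices -/

/-- `c` is the Catalan–Stieltjes matrix of `r, s, t`. -/
structure IsArray (r s t : ℕ → ℝ[X]) (c : ℕ → ℕ → ℝ[X]) : Prop where
  c00 : c 0 0 = 1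
  upper : ∀ n k, n < k → c n k = 0
  rec0 : ∀ n, c (n + 1) 0 = s 0 * c n 0 + t 1 * c n 1
  rec1 : ∀ n k, c (n + 1) (k + 1) =
      r k * c n k + s (k + 1) * c n (k + 1) + t (k + 2) * c n (k + 2)

/-- The Catalan–Stieltjes matrix of `r, s, t`. -/
noncomputable def array (r s t : ℕ → ℝ[X]) : ℕ → ℕ → ℝ[X]
  | 0, k => if k = 0 then 1 else 0
  | n + 1, 0 => s 0 * array r s t n 0 + t 1 * array r s t n 1
  | n + 1, k + 1 => r k * array r s t n k + s (k + 1) * array r s t n (k + 1)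
      + t (k + 2) * array r s t n (k + 2)

lemma array_isArray (r s t : ℕ → ℝ[X]) : IsArray r s t (array r s t) := by
  refine ⟨by simp [array], ?_, fun n => by rw [array], fun n k => by rw [array]⟩
  intro n
  induction n with
  | zero => intro k hk; rw [array, if_neg (by omega)]
  | succ n ih =>
    intro k hk
    obtain ⟨k, rfl⟩ : ∃ m, k = m + 1 := ⟨k - 1, by omega⟩
    rw [array, ih k (by omega), ih (k + 1) (by omega), ih (k + 2) (by omega)]
    ring

/-- Row `n + 1` of `c` is row `n` times `J`. -/
lemma IsArray.succ {r s t : ℕ → ℝ[X]} {c : ℕ → ℕ → ℝ[X]} (hc : IsArray r s t c) {n N : ℕ}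
    (hN : n < N) (k : ℕ) : c (n + 1) k = dot N (c n) (jac r s t k) := by
  have key : ∀ (S : Finset ℕ), (∀ l, l ≤ k + 1 → k ≤ l + 1 → l ∈ S) →
      dot N (c n) (jac r s t k) = ∑ l ∈ S, c n l * jac r s t k l := by
    intro S hS
    have h1 : dot N (c n) (jac r s t k) =
        ∑ l ∈ Finset.range N ∪ S, c n l * jac r s t k l := by
      refine Finset.sum_subset Finset.subset_union_left fun l _ hl => ?_
      rw [hc.upper n l (by simp at hl; omega), zero_mul]
    rw [h1]
    refine (Finset.sum_subset Finset.subset_union_right fun l _ hl => ?_).symm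
    rw [jac_eq_zero r s t, mul_zero]
    by_contra hcon
    exact hl (hS l (by omega) (by omega))
  cases k with
  | zero =>
    rw [key {0, 1} (by intro l h1 h2; simp; omega), hc.rec0]
    simp [jac]; ring
  | succ k =>
    rw [key {k, k + 1, k + 2} (by intro l h1 h2; simp; omega), hc.rec1]
    rw [Finset.sum_insert (by simp), Finset.sum_insert (by simp), Finset.sum_singleton]
    simp [jac]; ring

section array

variable {r s t : ℕ → ℝ[X]} {c : ℕ → ℕ → ℝ[X]} (hr : ∀ k, QNonneg (r k)) (hs : ∀ k, QNonneg (s k))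
  (ht : ∀ k, QNonneg (t (k + 1))) (hst : ∀ k, QNonneg (s k * s (k + 1) - r k * t (k + 1)))
  (hc : IsArray r s t c)

include hr hs ht hc in
lemma array_nonneg (n k : ℕ) : QNonneg (c n k) := by
  induction n generalizing k with
  | zero =>
    cases k with
    | zero => rw [hc.c00]; exact QNonneg.one
    | succ k => rw [hc.upper 0 _ (by omega)]; exact QNonneg.zero
  | succ n ih =>
    rw [hc.succ (Nat.lt_succ_self n)]
    exact QNonneg.sum _ _ fun l _ => (ih l).mul (jac_nonneg hr hs ht _ _)

include hr hs ht hst hc in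
lemma array_good2 {u v : ℕ} (huv : u < v) : Good2 (c u) (c v) := by
  have hn := array_nonneg hr hs ht hc
  induction u generalizing v with
  | zero =>
    intro a b hab
    rw [hc.upper 0 b (by omega), zero_mul, sub_zero]
    exact (hn _ _).mul (hn _ _)
  | succ u ih =>
    obtain ⟨v, rfl⟩ : ∃ m, v = m + 1 := ⟨v - 1, by omega⟩
    intro a b hab
    simp only [hc.succ (show u < v + 1 by omega), hc.succ (show v < v + 1 by omega)]
    exact (ih (by omega)).mul (jac_good2 hr hs ht hst hab) _

include hr hs ht hst hc in
/-- Induction on the first row: row `0` is a unit vector, for which both immanants degenerate, and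
rows `u + 1, v + 1, w + 1` are rows `u, v, w` multiplied by `J`. -/
lemma array_good {u v w : ℕ} (huv : u < v) (hvw : v < w) : Good (c u) (c v) (c w) := by
  have hn := array_nonneg hr hs ht hc
  suffices H : (∀ a b d, a < b → b < d → QNonneg (imm1 (c u) (c v) (c w) a b d)) ∧
      (∀ a b d, a < b → b < d → QNonneg (imm2 (c u) (c v) (c w) a b d)) from
    ⟨hn u, hn v, hn w, array_good2 hr hs ht hst hc huv, array_good2 hr hs ht hst hc hvw, H.1, H.2⟩
  induction u generalizing v w with
  | zero =>
    refine ⟨fun a b d hab hbd => ?_, fun a b d hab hbd => ?_⟩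
    · rw [imm1, hc.upper 0 b (by omega), hc.upper 0 d (by omega)]
      convert QNonneg.zero using 1; ring
    · rw [imm2, hc.upper 0 b (by omega), hc.upper 0 d (by omega)]
      convert ((hn 0 a).mul (hn v d)).mul (hn w b) using 1; ring
  | succ u ih =>
    obtain ⟨v, rfl⟩ : ∃ m, v = m + 1 := ⟨v - 1, by omega⟩
    obtain ⟨w, rfl⟩ : ∃ m, w = m + 1 := ⟨w - 1, by omega⟩
    obtain ⟨i1, i2⟩ := ih (v := v) (w := w) (by omega) (by omega)
    have hg : Good (c u) (c v) (c w) := ⟨hn u, hn v, hn w,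
      array_good2 hr hs ht hst hc (by omega), array_good2 hr hs ht hst hc (by omega), i1, i2⟩
    refine ⟨fun a b d hab hbd => ?_, fun a b d hab hbd => ?_⟩
    · simp only [imm1, hc.succ (show u < w + 1 by omega), hc.succ (show v < w + 1 by omega),
        hc.succ (show w < w + 1 by omega)]
      exact hg.imm1_mul (jac_good hr hs ht hst hab hbd) _
    · simp only [imm2, hc.succ (show u < w + 1 by omega), hc.succ (show v < w + 1 by omega),
        hc.succ (show w < w + 1 by omega)]
      exact hg.imm2_mul (jac_good hr hs ht hst hab hbd) _

end array

/-! ### The Hankel matrix -/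

/-- The Hankel factorization `(J^(p+q))₀₀ = ∑ l, (J^p)₀ₗ (J^q)ₗ₀`; here `d`, the array of the
transpose of `J`, has entries `d q l = (J^q)ₗ₀`. -/
lemma hankel {r s t : ℕ → ℝ[X]} {c d : ℕ → ℕ → ℝ[X]} (hc : IsArray r s t c)
    (hd : IsArray (fun n => t (n + 1)) s (fun n => r (n - 1)) d) (N p q : ℕ) (hN : p + q < N) :
    c (p + q) 0 = dot N (c p) (d q) := by
  induction q generalizing p with
  | zero =>
    rw [dot, Finset.sum_eq_single 0]
    · rw [hd.c00, mul_one, add_zero]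
    · intro l _ hl; rw [hd.upper 0 l (by omega), mul_zero]
    · intro h; simp at h; omega
  | succ q ih =>
    rw [show p + (q + 1) = (p + 1) + q by ring, ih (p + 1) (by omega)]
    have h1 : ∀ k, c (p + 1) k = dot N (c p) (jac r s t k) := hc.succ (by omega)
    have h2 : ∀ l, d (q + 1) l = dot N (d q) (fun k => jac r s t k l) := by
      intro l
      rw [hd.succ (show q < N by omega)]
      congr 1; funext k; exact jac_swap r s t l k
    rw [dot, dot]
    simp only [h1, h2]
    simp only [dot, Finset.sum_mul, Finset.mul_sum]
    rw [Finset.sum_comm]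
    exact Finset.sum_congr rfl fun _ _ => Finset.sum_congr rfl fun _ _ => by ring

/-- `f ≥_q u` and `g ≥_q v` imply `fg ≥_q uv`. -/
lemma qnonneg_mul_sub_mul {f g u v : ℝ[X]} (hu : QNonneg u) (hg : QNonneg g)
    (h1 : QNonneg (f - u)) (h2 : QNonneg (g - v)) : QNonneg (f * g - u * v) := by
  convert (h1.mul hg).add (hu.mul h2) using 1; ring

theorem stmt12 (r s t : ℕ → Polynomial ℝ) (c : ℕ → ℕ → Polynomial ℝ)
    (hr : ∀ k, QNonneg (r k)) (hs : ∀ k, QNonneg (s k)) (ht : ∀ k, 1 ≤ k → QNonneg (t k))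
    (hc00 : c 0 0 = 1)
    (hupper : ∀ n k, n < k → c n k = 0)
    (hrec0 : ∀ n, c (n + 1) 0 = s 0 * c n 0 + t 1 * c n 1)
    (hrec : ∀ n k, c (n + 1) (k + 1) =
      r k * c n k + s (k + 1) * c n (k + 1) + t (k + 2) * c n (k + 2))
    (hcond : (QNonneg (s 0 - r 0) ∧ ∀ k, 1 ≤ k → QNonneg (s k - (r k + t k))) ∨
      (QNonneg (s 0 - t 1) ∧ ∀ k, 1 ≤ k → QNonneg (s k - (r (k - 1) + t (k + 1)))) ∨
      (QNonneg (s 0 - 1) ∧ ∀ k, 1 ≤ k → QNonneg (s k - (r (k - 1) * t k + 1))) ∨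
      (QNonneg (s 0 - r 0 * t 1) ∧ ∀ k, 1 ≤ k → QNonneg (s k - (r k * t (k + 1) + 1))) ∨
      (∃ b c' : ℕ → Polynomial ℝ, (∀ k, QNonneg (b k)) ∧ (∀ k, QNonneg (c' k)) ∧
      ∀ k, r k = 1 ∧ s k = b k + c' k ∧ t (k + 1) = b (k + 1) * c' k))
    (i j k : ℕ) (hij : i < j) (hjk : j < k) :
    QNonneg (c (2 * i) 0 * c (j + k) 0 ^ 2 + c (2 * j) 0 * c (i + k) 0 ^ 2 +
             c (2 * k) 0 * c (i + j) 0 ^ 2 -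
             3 * (c (i + j) 0 * c (j + k) 0 * c (k + i) 0)) := by
  have hst : ∀ k, QNonneg (s k * s (k + 1) - r k * t (k + 1)) := by
    have ht' : ∀ k, QNonneg (t (k + 1)) := fun k => ht _ (by omega)
    rcases hcond with ⟨h0, h⟩ | ⟨h0, h⟩ | ⟨h0, h⟩ | ⟨h0, h⟩ | ⟨b, c', hb, hc', h⟩
    · intro k
      refine qnonneg_mul_sub_mul (hr k) (hs _) ?_ ?_
      · cases k with
        | zero => exact h0
        | succ k => convert (h (k + 1) (by omega)).add (ht' k) using 1; ring
      · convert (h (k + 1) (by omega)).add (hr (k + 1)) using 1; ring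
    · intro k
      rw [mul_comm (r k)]
      refine qnonneg_mul_sub_mul (ht' k) (hs _) ?_ ?_
      · cases k with
        | zero => exact h0
        | succ k => convert (h (k + 1) (by omega)).add (hr k) using 1; simp; ring
      · convert (h (k + 1) (by omega)).add (ht' (k + 1)) using 1; simp; ring
    · intro k
      rw [← one_mul (r k * t (k + 1))]
      refine qnonneg_mul_sub_mul QNonneg.one (hs _) ?_ ?_
      · cases k with
        | zero => exact h0
        | succ k => convert (h (k + 1) (by omega)).add ((hr k).mul (ht' k)) using 1; simp; ring
      · convert (h (k + 1) (by omega)).add QNonneg.one using 1; simp; ring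
    · intro k
      rw [← mul_one (r k * t (k + 1))]
      refine qnonneg_mul_sub_mul ((hr k).mul (ht' k)) (hs _) ?_ ?_
      · cases k with
        | zero => exact h0
        | succ k => convert (h (k + 1) (by omega)).add QNonneg.one using 1; ring
      · convert (h (k + 1) (by omega)).add ((hr (k + 1)).mul (ht' (k + 1))) using 1; ring
    · intro k
      rw [(h k).1, (h k).2.1, (h (k + 1)).2.1, (h k).2.2]
      convert (((hb k).mul (hb (k + 1))).add ((hb k).mul (hc' (k + 1)))).add
        ((hc' k).mul (hc' (k + 1))) using 1
      ring
  have ht' : ∀ k, QNonneg (t (k + 1)) := fun k => ht _ (by omega)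
  have hc : IsArray r s t c := ⟨hc00, hupper, hrec0, hrec⟩
  have hd := array_isArray (fun n => t (n + 1)) s (fun n => r (n - 1))
  set d := array (fun n => t (n + 1)) s (fun n => r (n - 1)) with hddef
  have gc := array_good hr hs ht' hst hc hij hjk
  have gd := array_good (r := fun n => t (n + 1)) (t := fun n => r (n - 1)) ht' hs (fun k => hr _)
    (fun k => by convert hst k using 1; simp; ring) hd hij hjk
  -- any bound exceeding `2 * k` works for the truncation
  have H : ∀ p q, p + q < 2 * k + 1 → dot (2 * k + 1) (c p) (d q) = c (p + q) 0 :=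
    fun p q h => (hankel hc hd _ p q h).symm
  have e1 := gc.imm1_mul gd (2 * k + 1)
  have e2 := gc.imm2_mul gd (2 * k + 1)
  have e3 := (array_good2 hr hs ht' hst hc hij).mul
    (array_good2 (r := fun n => t (n + 1)) (t := fun n => r (n - 1)) ht' hs (fun k => hr _)
    (fun k => by convert hst k using 1; simp; ring) hd hjk) (2 * k + 1)
  rw [H i i (by omega), H i j (by omega), H i k (by omega), H j i (by omega), H j j (by omega),
    H j k (by omega), H k i (by omega), H k j (by omega)] at e2
  rw [H i j (by omega), H i k (by omega), H j i (by omega), H j j (by omega),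
    H j k (by omega), H k i (by omega), H k j (by omega), H k k (by omega)] at e1
  rw [H i j (by omega), H i k (by omega), H j j (by omega), H j k (by omega)] at e3
  have e4 := (array_nonneg hr hs ht' hc (i + k) 0).mul e3
  convert (e1.add e2).add e4 using 1
  rw [add_comm j i, add_comm k i, add_comm k j, two_mul, two_mul, two_mul]
  ring
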